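/- Let d ≥ 2. In ℂ^{d²×d²}, let X = diag(0, …, 0, 1, …, 1) be the diagonal matrix whose first d² − d diagonal entries are 0 and whose last d diagonal entries are 1, and for each real τ > 0 let X̂_τ = diag(τ, 0, …, 0). Define F₁(X̂_τ, X) = (Tr √(√X̂_τ X √X̂_τ))² / (Tr(X̂_τ) Tr(X)) − (Tr(X − X̂_τ))² / d². Then F₁(X̂_τ, X) → −1 as τ → 0⁺; in particular, −1 is a tight (but unattained) lower bound for F₁ on pairs of nonzero positive semidefinite d²×d² matrices with traces at most d. -/

import Mathlib

open Matrix ComplexOrder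

/-- The positive semidefinite square root of a positive semidefinite matrix
(the definition of the older Mathlib, since removed). -/
noncomputable def Matrix.PosSemidef.sqrt {n 𝕜 : Type*} [Fintype n] [RCLike 𝕜] [DecidableEq n]
    {A : Matrix n n 𝕜} (hA : Matrix.PosSemidef A) : Matrix n n 𝕜 :=
  hA.1.eigenvectorUnitary.1 * diagonal ((↑) ∘ Real.sqrt ∘ hA.1.eigenvalues) *
  (star hA.1.eigenvectorUnitary : Matrix n n 𝕜)

/-- The positive semidefinite square root of a matrix (junk value `0` if the matrix is
not positive semidefinite). -/
noncomputable def matSqrt {n : Type*} [Fintype n] [DecidableEq n]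
    (M : Matrix n n ℂ) : Matrix n n ℂ :=
  open scoped Classical in
  if h : M.PosSemidef then h.sqrt else 0

/-- The diagonal `d² × d²` matrix whose first `d² − d` diagonal entries are `0` and whose
last `d` diagonal entries are `1`. -/
def X8 (d : ℕ) : Matrix (Fin (d ^ 2)) (Fin (d ^ 2)) ℂ :=
  Matrix.diagonal fun i => if (i : ℕ) < d ^ 2 - d then 0 else 1

/-- The diagonal `d² × d²` matrix `diag(τ, 0, …, 0)`. -/
def Xhat8 (d : ℕ) (τ : ℝ) : Matrix (Fin (d ^ 2)) (Fin (d ^ 2)) ℂ :=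
  Matrix.diagonal fun i => if (i : ℕ) = 0 then (τ : ℂ) else 0

theorem sqrt_aux {n : Type*} [Fintype n] [DecidableEq n] {A : Matrix n n ℂ}
    (hA : A.PosSemidef) : hA.sqrt * hA.sqrt = A ∧ hA.sqrtᴴ = hA.sqrt := by
  constructor
  · have hU : (star hA.1.eigenvectorUnitary : Matrix n n ℂ) * hA.1.eigenvectorUnitary.1 = 1 :=
      Unitary.coe_star_mul_self _
    have hD : (diagonal ((RCLike.ofReal : ℝ → ℂ) ∘ Real.sqrt ∘ hA.1.eigenvalues) : Matrix n n ℂ)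
        * diagonal ((RCLike.ofReal : ℝ → ℂ) ∘ Real.sqrt ∘ hA.1.eigenvalues)
        = diagonal ((RCLike.ofReal : ℝ → ℂ) ∘ hA.1.eigenvalues) := by
      rw [diagonal_mul_diagonal]
      congr 1
      funext i
      simp only [Function.comp]
      rw [← RCLike.ofReal_mul, Real.mul_self_sqrt (hA.eigenvalues_nonneg i)]
    have hs := hA.1.spectral_theorem
    rw [Unitary.conjStarAlgAut_apply] at hs
    conv_rhs => rw [hs]
    unfold Matrix.PosSemidef.sqrt
    calc _ = hA.1.eigenvectorUnitary.1 * (diagonal ((RCLike.ofReal : ℝ → ℂ) ∘ Real.sqrt ∘ hA.1.eigenvalues) *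
          ((star hA.1.eigenvectorUnitary : Matrix n n ℂ) * hA.1.eigenvectorUnitary.1) *
          diagonal ((RCLike.ofReal : ℝ → ℂ) ∘ Real.sqrt ∘ hA.1.eigenvalues)) *
          (star hA.1.eigenvectorUnitary : Matrix n n ℂ) := by simp only [Matrix.mul_assoc]
      _ = _ := by rw [hU, Matrix.mul_one, hD]
  · unfold Matrix.PosSemidef.sqrt
    rw [conjTranspose_mul, conjTranspose_mul, diagonal_conjTranspose, ← Matrix.mul_assoc]
    congr 2
    · simp [star_eq_conjTranspose]
    · congr 1
      funext i
      simp

theorem matSqrt_zero_aux {n : Type*} [Fintype n] [DecidableEq n] :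
    matSqrt (0 : Matrix n n ℂ) = 0 := by
  have h : (0 : Matrix n n ℂ).PosSemidef := Matrix.PosSemidef.zero
  rw [matSqrt, dif_pos h]
  obtain ⟨h1, h2⟩ := sqrt_aux h
  rw [← Matrix.conjTranspose_mul_self_eq_zero, h2, h1]

theorem X8_mul_Xhat8 (d : ℕ) (hd : 2 ≤ d) (τ : ℝ) : X8 d * Xhat8 d τ = 0 := by
  have : d < d ^ 2 := by nlinarith
  rw [X8, Xhat8, diagonal_mul_diagonal, ← diagonal_zero]
  congr 1
  funext i
  by_cases hi : (i : ℕ) = 0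
  · have : (i : ℕ) < d ^ 2 - d := by omega
    simp [this]
  · simp [hi]

theorem inner_zero (d : ℕ) (hd : 2 ≤ d) (τ : ℝ) :
    matSqrt (Xhat8 d τ) * X8 d * matSqrt (Xhat8 d τ) = 0 := by
  by_cases h : (Xhat8 d τ).PosSemidef
  · rw [matSqrt, dif_pos h]
    obtain ⟨h1, h2⟩ := sqrt_aux h
    have hz : X8 d * h.sqrt = 0 := by
      rw [← Matrix.self_mul_conjTranspose_eq_zero, conjTranspose_mul, h2, Matrix.mul_assoc,
        ← Matrix.mul_assoc h.sqrt, h1, ← Matrix.mul_assoc, X8_mul_Xhat8 d hd, Matrix.zero_mul]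
    rw [Matrix.mul_assoc, hz, Matrix.mul_zero]
  · rw [matSqrt, dif_neg h]; simp

theorem trace_X8 (d : ℕ) (hd : 2 ≤ d) : (X8 d).trace = d := by
  have h : d ≤ d ^ 2 := by nlinarith
  rw [X8, trace_diagonal,
    Fin.sum_univ_eq_sum_range (fun i => if i < d ^ 2 - d then (0 : ℂ) else 1) (d ^ 2)]
  obtain ⟨k, hk⟩ := Nat.exists_eq_add_of_le h
  have hk' : d ^ 2 - d = k := by omega
  rw [hk', hk, add_comm d k, Finset.sum_range_add, Finset.sum_eq_zero]
  · simp
  · intro i hi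
    simp [Finset.mem_range.mp hi]

theorem trace_Xhat8 (d : ℕ) (hd : 2 ≤ d) (τ : ℝ) : (Xhat8 d τ).trace = τ := by
  have h : 0 < d ^ 2 := by positivity
  rw [Xhat8, trace_diagonal,
    Fin.sum_univ_eq_sum_range (fun i => if i = 0 then (τ : ℂ) else 0) (d ^ 2)]
  simp [h]
  try omega

/-- For `d ≥ 2`, `X = diag(0,…,0,1,…,1)` (last `d` entries one) and `X̂_τ = diag(τ,0,…,0)`,
the corrected process fidelity
`F₁(X̂_τ, X) = (Tr √(√X̂_τ X √X̂_τ))² / (Tr(X̂_τ) Tr(X)) − (Tr(X − X̂_τ))² / d²`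
tends to `−1` as `τ → 0⁺`: the lower bound `−1` of `F₁` is tight but unattained. -/
theorem stmt8 (d : ℕ) (hd : 2 ≤ d) :
    Filter.Tendsto
      (fun τ : ℝ =>
        ((matSqrt (matSqrt (Xhat8 d τ) * X8 d * matSqrt (Xhat8 d τ))).trace.re) ^ 2
            / ((Xhat8 d τ).trace.re * (X8 d).trace.re)
          - ((X8 d - Xhat8 d τ).trace.re) ^ 2 / (d : ℝ) ^ 2)
      (nhdsWithin 0 (Set.Ioi 0)) (nhds (-1)) := by
  have hd0 : (d : ℝ) ≠ 0 := by
    have : d ≠ 0 := by omega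
    exact_mod_cast this
  simp only [inner_zero d hd, matSqrt_zero_aux, trace_sub, trace_X8 d hd, trace_Xhat8 d hd]
  have hc : Continuous (fun τ : ℝ => - ((d : ℝ) - τ) ^ 2 / (d : ℝ) ^ 2) := by fun_prop
  have ht := (hc.tendsto 0).mono_left (nhdsWithin_le_nhds (s := Set.Ioi 0))
  convert ht using 2
  · simp [neg_div]
  · rw [sub_zero, neg_div, div_self (pow_ne_zero 2 hd0)]
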